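/- Let p₁₀, p₀₁ and p₅₀, p₄₁, p₃₂, p₂₃, p₁₄, p₀₅ be real numbers with p₁₀² + p₀₁² ≠ 0, and set P₁(θ) = p₁₀ cos θ + p₀₁ sin θ and P₅(θ) = Σ_{i+j=5} p_{ij} cosⁱθ sinʲθ. Then the equation dr/dθ = r(P₁(θ) r + P₅(θ) r⁵) has a center at r = 0 if and only if p₀₁(5p₅₀ + p₃₂ + p₁₄) = p₁₀(5p₀₅ + p₂₃ + p₄₁), p₁₀³(p₂₃ + 10p₀₅) − 3p₁₀²p₀₁(2p₁₄ + p₃₂) + 3p₁₀p₀₁²(p₂₃ + 2p₄₁) − p₀₁³(p₃₂ + 10p₅₀) = 0, and p₅₀p₀₁⁵ − p₄₁p₀₁⁴p₁₀ + p₃₂p₀₁³p₁₀² − p₂₃p₀₁²p₁₀³ + p₁₄p₀₁p₁₀⁴ − p₀₅p₁₀⁵ = 0. -/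

import Mathlib

open Real

/-- A 2π-periodic scalar ODE `dr/dθ = F θ r` has a center at `r = 0` if every solution
with `|r 0|` sufficiently small is defined on `[0, 2π]` and satisfies `r (2π) = r 0`. -/
def HasCenterAtZero (F : ℝ → ℝ → ℝ) : Prop :=
  ∃ ε > (0 : ℝ), ∀ r : ℝ → ℝ, |r 0| < ε →
    (∀ θ ∈ Set.Icc (0 : ℝ) (2 * Real.pi), HasDerivAt r (F θ (r θ)) θ) →
    r (2 * Real.pi) = r 0

theorem sx_lip (R M a b p q : ℝ) (ha : |a| ≤ R) (hb : |b| ≤ R) (hp : |p| ≤ M) (hq : |q| ≤ M) :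
    |a * (p * a + q * a ^ 5) - b * (p * b + q * b ^ 5)| ≤ (M * (2 * R + 6 * R ^ 5)) * |a - b| := by
  have hR : 0 ≤ R := (abs_nonneg a).trans ha
  have hM : 0 ≤ M := (abs_nonneg p).trans hp
  have e : a * (p * a + q * a ^ 5) - b * (p * b + q * b ^ 5) =
      (p * (a + b) + q * (a^5 + a^4*b + a^3*b^2 + a^2*b^3+a*b^4+b^5)) * (a - b) := by ring
  rw [e, abs_mul]
  refine mul_le_mul_of_nonneg_right ?_ (abs_nonneg _)
  have m : ∀ i j : ℕ, |a ^ i * b ^ j| ≤ R ^ i * R ^ j := by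
    intro i j
    rw [abs_mul, abs_pow, abs_pow]
    gcongr
  have h1 : |a + b| ≤ 2 * R := (abs_add_le _ _).trans (by linarith)
  have h2 : |a^5 + a^4*b + a^3*b^2 + a^2*b^3+a*b^4+b^5| ≤ 6 * R ^ 5 := by
    have h50 := abs_le.1 (m 5 0)
    have h41 := abs_le.1 (m 4 1)
    have h32 := abs_le.1 (m 3 2)
    have h23 := abs_le.1 (m 2 3)
    have h14 := abs_le.1 (m 1 4)
    have h05 := abs_le.1 (m 0 5)
    rw [abs_le]
    constructor <;> linarith [h50.1, h50.2, h41.1, h41.2, h32.1, h32.2, h23.1, h23.2, h14.1, h14.2, h05.1, h05.2]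
  calc _ ≤ |p * (a + b)| + |q * (a^5 + a^4*b + a^3*b^2 + a^2*b^3+a*b^4+b^5)| := abs_add_le _ _
    _ ≤ M * (2 * R) + M * (6 * R ^ 5) := by
      rw [abs_mul, abs_mul]; gcongr
    _ = _ := by ring

theorem sx_sym (P1 P5 : ℝ → ℝ) (c1 : Continuous P1) (c5 : Continuous P5) (t0 a : ℝ) (ha : 0 ≤ a)
    (o1 : ∀ v, P1 (t0 + v) = - P1 (t0 - v)) (o5 : ∀ v, P5 (t0 + v) = - P5 (t0 - v))
    (r : ℝ → ℝ) (hr : ∀ θ ∈ Set.Icc (t0 - a) (t0 + a),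
      HasDerivAt r (r θ * (P1 θ * r θ + P5 θ * r θ ^ 5)) θ) :
    r (t0 + a) = r (t0 - a) := by
  have hrc : ContinuousOn r (Set.Icc (t0 - a) (t0 + a)) :=
    fun θ hθ => (hr θ hθ).continuousAt.continuousWithinAt
  obtain ⟨R, hR⟩ := isCompact_Icc.exists_bound_of_continuousOn hrc
  obtain ⟨M1, hM1⟩ := (isCompact_Icc (a := t0 - a) (b := t0 + a)).exists_bound_of_continuousOn c1.continuousOn
  obtain ⟨M5, hM5⟩ := (isCompact_Icc (a := t0 - a) (b := t0 + a)).exists_bound_of_continuousOn c5.continuousOn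
  have dplus : ∀ t ∈ Set.Icc 0 a, HasDerivAt (fun t => r (t0 + t))
      ((r (t0+t)) * (P1 (t0 + t) * (r (t0+t)) + P5 (t0+t) * (r (t0+t)) ^ 5)) t := by
    intro t ht
    have := hr (t0 + t) ⟨by linarith [ht.1], by linarith [ht.2]⟩
    exact this.comp_const_add t0 t
  have dminus : ∀ t ∈ Set.Icc 0 a, HasDerivAt (fun t => r (t0 - t))
      ((r (t0-t)) * (P1 (t0 + t) * (r (t0-t)) + P5 (t0+t) * (r (t0-t)) ^ 5)) t := by
    intro t ht
    have := hr (t0 - t) ⟨by linarith [ht.2], by linarith [ht.1]⟩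
    have := this.comp_const_sub t0 t
    rw [o1, o5]
    exact this.congr_deriv (by ring)
  have key := ODE_solution_unique_of_mem_Icc_right
    (v := fun t y => y * (P1 (t0 + t) * y + P5 (t0 + t) * y ^ 5))
    (s := fun _ => {y : ℝ | |y| ≤ R}) (K := Real.toNNReal (max M1 M5 * (2 * R + 6 * R ^ 5)))
    (f := fun t => r (t0 + t)) (g := fun t => r (t0 - t)) (a := 0) (b := a) ?_ ?_ ?_ ?_ ?_ ?_ ?_ ?_
  · exact key (Set.right_mem_Icc.2 ha)
  · intro t ht
    have hm : t0 + t ∈ Set.Icc (t0 - a) (t0 + a) := ⟨by linarith [ht.1], by linarith [ht.2]⟩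
    refine LipschitzOnWith.of_dist_le_mul ?_
    intro x hx y hy
    rw [Real.dist_eq, Real.dist_eq]
    refine (sx_lip R (max M1 M5) x y _ _ hx hy ((hM1 _ hm).trans (le_max_left _ _)) ((hM5 _ hm).trans (le_max_right _ _))).trans ?_
    gcongr
    exact Real.le_coe_toNNReal _
  · exact fun t ht => (dplus t ht).continuousAt.continuousWithinAt
  · exact fun t ht => (dplus t (Set.Ico_subset_Icc_self ht)).hasDerivWithinAt
  · exact fun t ht => hR _ ⟨by linarith [ht.1], by linarith [ht.2]⟩
  · exact fun t ht => (dminus t ht).continuousAt.continuousWithinAt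
  · exact fun t ht => (dminus t (Set.Ico_subset_Icc_self ht)).hasDerivWithinAt
  · exact fun t ht => hR _ ⟨by linarith [ht.2], by linarith [ht.1]⟩
  · simp

theorem sx_picard {f : ℝ → ℝ → ℝ} {tmin tmax : ℝ} {t₀ : Set.Icc tmin tmax} {x : ℝ} {a L K : NNReal}
    (hf : IsPicardLindelof f t₀ x a 0 L K) :
    ∃ α : ℝ → ℝ, α t₀ = x ∧
      ∀ t ∈ Set.Icc tmin tmax, HasDerivWithinAt α (f t (α t)) (Set.Icc tmin tmax) t ∧
        α t ∈ Metric.closedBall x a := by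
  have hx : x ∈ Metric.closedBall x ((0 : NNReal) : ℝ) := Metric.mem_closedBall_self le_rfl
  obtain ⟨α, hα⟩ := ODE.FunSpace.exists_isFixedPt_next hf hx
  refine ⟨α.compProj, by rw [ODE.FunSpace.compProj_val, ← hα, ODE.FunSpace.next_apply₀], fun t ht ↦ ⟨?_, α.compProj_mem_closedBall hf.mul_max_le⟩⟩
  apply ODE.hasDerivWithinAt_picard_Icc t₀.2 hf.continuousOn_uncurry
    α.continuous_compProj.continuousOn (fun _ ht' ↦ α.compProj_mem_closedBall hf.mul_max_le)
    x ht |>.congr_of_mem _ ht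
  intro t' ht'
  nth_rw 1 [← hα]
  rw [ODE.FunSpace.compProj_of_mem ht', ODE.FunSpace.next_apply]

theorem sx_exist (P1 P5 : ℝ → ℝ) (c1 : Continuous P1) (c5 : Continuous P5) (M T : ℝ) (hT : 0 ≤ T) (hM : 0 ≤ M)
    (b1 : ∀ t ∈ Set.Icc (-1) (T+1), |P1 t| ≤ M) (b5 : ∀ t ∈ Set.Icc (-1) (T+1), |P5 t| ≤ M)
    (x : ℝ) (hx : 0 < x) (hx1 : x ≤ 1/2) (hxs : 2 * M * (2 * x) ^ 2 * (T + 1) ≤ x / 2) :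
    ∃ r : ℝ → ℝ, r 0 = x ∧ ∀ θ ∈ Set.Icc 0 T,
      HasDerivAt r (r θ * (P1 θ * r θ + P5 θ * r θ ^ 5)) θ ∧ x / 2 ≤ r θ ∧ r θ ≤ 2 * x := by
  have h0 : (0:ℝ) ∈ Set.Icc (-1) (T+1) := ⟨by norm_num, by linarith⟩
  have pl : IsPicardLindelof (fun θ y => y * (P1 θ * y + P5 θ * y ^ 5)) (⟨0, h0⟩ : Set.Icc (-1) (T+1)) x
      (Real.toNNReal (x / 2)) 0 (Real.toNNReal (2 * M * (2 * x) ^ 2)) (Real.toNNReal (M * (2 * 1 + 6 * 1 ^ 5))) := by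
    have hb : ∀ y ∈ Metric.closedBall x ((Real.toNNReal (x / 2) : NNReal) : ℝ), |y| ≤ 2 * x := by
      intro y hy
      rw [Real.coe_toNNReal _ (by positivity), Metric.mem_closedBall, Real.dist_eq, abs_le] at hy
      rw [abs_le]; constructor <;> linarith [hy.1, hy.2]
    constructor
    · intro t ht
      refine LipschitzOnWith.of_dist_le_mul ?_
      intro y hy z hz
      rw [Real.dist_eq, Real.dist_eq]
      refine (sx_lip 1 M y z _ _ ((hb y hy).trans (by linarith)) ((hb z hz).trans (by linarith)) (b1 t ht) (b5 t ht)).trans ?_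
      gcongr
      exact Real.le_coe_toNNReal _
    · intro y hy
      fun_prop
    · intro t ht y hy
      have h := hb y hy
      rw [Real.coe_toNNReal _ (by positivity), Real.norm_eq_abs]
      have e : y * (P1 t * y + P5 t * y ^ 5) = (P1 t + P5 t * y ^ 4) * y ^ 2 := by ring
      rw [e, abs_mul, abs_pow]
      have : |y| ^ 4 ≤ 1 := pow_le_one₀ (abs_nonneg _) (by linarith)
      gcongr
      calc _ ≤ |P1 t| + |P5 t * y ^ 4| := abs_add_le _ _
        _ ≤ M + M * 1 := by
          rw [abs_mul, abs_pow]
          gcongr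
          · exact b1 t ht
          · exact b5 t ht
        _ = 2 * M := by ring
    · rw [Real.coe_toNNReal _ (by positivity), Real.coe_toNNReal _ (by positivity)]
      simp only [sub_zero, NNReal.coe_zero, zero_sub, neg_neg]
      rw [max_eq_left (by linarith)]
      exact hxs
  obtain ⟨r, hr0, hr⟩ := sx_picard pl
  refine ⟨r, hr0, fun θ hθ => ?_⟩
  obtain ⟨hd, hbb⟩ := hr θ ⟨by linarith [hθ.1], by linarith [hθ.2]⟩
  refine ⟨hd.hasDerivAt (Icc_mem_nhds (by linarith [hθ.1]) (by linarith [hθ.2])), ?_⟩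
  rw [Real.coe_toNNReal _ (by positivity), Metric.mem_closedBall, Real.dist_eq, abs_le] at hbb
  constructor <;> linarith [hbb.1, hbb.2]

theorem sx_step (a C x0 : ℝ) (n : ℕ) (q : ℝ → ℝ) (hq : Continuous q) (h0 : 0 < x0)
    (h : ∀ x, 0 < x → x < x0 → |a + x * q x| ≤ C * x ^ (n + 1)) :
    a = 0 ∧ ∀ x, 0 < x → x < x0 → |q x| ≤ C * x ^ n := by
  have ha : a = 0 := by
    have hlim : Filter.Tendsto (fun x => C * x ^ (n + 1) - |a + x * q x|) (nhdsWithin 0 (Set.Ioi 0))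
        (nhds (C * 0 ^ (n + 1) - |a + 0 * q 0|)) :=
      (Continuous.tendsto (by fun_prop) 0).mono_left nhdsWithin_le_nhds
    have := ge_of_tendsto hlim (b := 0) (by
      filter_upwards [Ioo_mem_nhdsGT h0] with x hx
      linarith [h x hx.1 hx.2])
    have h2 : |a| ≤ 0 := by simpa using this
    exact abs_nonpos_iff.1 h2
  refine ⟨ha, fun x hx hx0 => ?_⟩
  have := h x hx hx0
  rw [ha, zero_add, abs_mul, abs_of_pos hx] at this
  have h3 : x * |q x| ≤ x * (C * x ^ n) := by rw [pow_succ] at this; linarith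
  exact le_of_mul_le_mul_left h3 hx

theorem sx_coef (a0 a1 a2 a3 a4 a5 C x0 : ℝ) (h0 : 0 < x0)
    (h : ∀ x, 0 < x → x < x0 →
      |a0 + a1 * x + a2 * x ^ 2 + a3 * x ^ 3 + a4 * x ^ 4 + a5 * x ^ 5| ≤ C * x ^ 6) :
    a0 = 0 ∧ a1 = 0 ∧ a2 = 0 ∧ a3 = 0 ∧ a4 = 0 ∧ a5 = 0 := by
  obtain ⟨e0, g0⟩ := sx_step a0 C x0 5 (fun x => a1 + x * (a2 + x * (a3 + x * (a4 + x * a5)))) (by fun_prop) h0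
    (fun x h1 h2 => by convert h x h1 h2 using 2; ring)
  obtain ⟨e1, g1⟩ := sx_step a1 C x0 4 _ (by fun_prop) h0 g0
  obtain ⟨e2, g2⟩ := sx_step a2 C x0 3 _ (by fun_prop) h0 g1
  obtain ⟨e3, g3⟩ := sx_step a3 C x0 2 _ (by fun_prop) h0 g2
  obtain ⟨e4, g4⟩ := sx_step a4 C x0 1 _ (by fun_prop) h0 g3
  obtain ⟨e5, g5⟩ := sx_step a5 C x0 0 (fun _ => 0) (by fun_prop) h0 (fun x h1 h2 => by simpa using g4 x h1 h2)
  exact ⟨e0, e1, e2, e3, e4, e5⟩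

theorem sx_pt0 (y u : ℝ) (hy : |y| ≤ 1 / 2) (hu : u * (1 - y) = 1) : |u ^ 4| ≤ 16 := by
  have h := abs_le.1 hy
  have h1 : 0 < u := by
    by_contra hc
    nlinarith [h.1, h.2]
  have h2 : u ≤ 2 := by nlinarith [h.1, h.2]
  rw [abs_of_nonneg (by positivity)]
  calc u ^ 4 ≤ 2 ^ 4 := by gcongr
    _ = 16 := by norm_num

theorem sx_pt1 (y u : ℝ) (hy : |y| ≤ 1 / 2) (hu : u * (1 - y) = 1) : |u ^ 4 - 1| ≤ 240 * |y| := by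
  have h4 : u ^ 4 * (1 - y) ^ 4 = 1 := by rw [← mul_pow, hu, one_pow]
  have e : u ^ 4 - 1 = u ^ 4 * (4 - 6 * y + 4 * y ^ 2 - y ^ 3) * y := by linear_combination h4
  have h := abs_le.1 hy
  have hb : |4 - 6 * y + 4 * y ^ 2 - y ^ 3| ≤ 15 := by
    rw [abs_le]; constructor <;> nlinarith [h.1, h.2, sq_nonneg y, mul_nonneg (sq_nonneg y) (by linarith : 0 ≤ 1/2 - y), mul_nonneg (sq_nonneg y) (by linarith : 0 ≤ 1/2 + y)]
  rw [e, abs_mul, abs_mul]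
  calc _ ≤ 16 * 15 * |y| := by
        gcongr
        exact sx_pt0 y u hy hu
    _ = _ := by ring

theorem sx_pt2 (y u : ℝ) (hy : |y| ≤ 1 / 2) (hu : u * (1 - y) = 1) :
    |u ^ 4 - (1 + 4 * y + 10 * y ^ 2 + 20 * y ^ 3 + 35 * y ^ 4 + 56 * y ^ 5)| ≤ 8720 * |y| ^ 6 := by
  have h4 : u ^ 4 * (1 - y) ^ 4 = 1 := by rw [← mul_pow, hu, one_pow]
  have e : u ^ 4 - (1 + 4 * y + 10 * y ^ 2 + 20 * y ^ 3 + 35 * y ^ 4 + 56 * y ^ 5) =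
      u ^ 4 * (84 - 216 * y + 189 * y ^ 2 - 56 * y ^ 3) * y ^ 6 := by
    linear_combination ((1 + 4 * y + 10 * y ^ 2 + 20 * y ^ 3 + 35 * y ^ 4 + 56 * y ^ 5)) * h4
  have h := abs_le.1 hy
  have hb : |84 - 216 * y + 189 * y ^ 2 - 56 * y ^ 3| ≤ 545 := by
    rw [abs_le]; constructor <;> nlinarith [h.1, h.2, sq_nonneg y, mul_nonneg (sq_nonneg y) (by linarith : 0 ≤ 1/2 - y), mul_nonneg (sq_nonneg y) (by linarith : 0 ≤ 1/2 + y)]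
  rw [e, abs_mul, abs_mul, abs_pow y 6]
  calc _ ≤ 16 * 545 * |y| ^ 6 := by
        gcongr
        exact sx_pt0 y u hy hu
    _ = _ := by ring

theorem sx_pt3 (y w n : ℝ) (hy : |y| ≤ n) (hw : |w| ≤ n) (hn : n ≤ 1) :
    |(1 + 4 * y + 10 * y ^ 2 + 20 * y ^ 3 + 35 * y ^ 4 + 56 * y ^ 5) -
      (1 + 4 * w + 10 * w ^ 2 + 20 * w ^ 3 + 35 * w ^ 4 + 56 * w ^ 5) - 4 * (y - w)| ≤ |y - w| * (500 * n) := by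
  have hn0 : 0 ≤ n := (abs_nonneg y).trans hy
  have m : ∀ i j : ℕ, 1 ≤ i + j → |y ^ i * w ^ j| ≤ n := by
    intro i j hij
    rw [abs_mul, abs_pow, abs_pow]
    calc _ ≤ n ^ i * n ^ j := by gcongr
      _ = n ^ (i + j) := by ring
      _ ≤ n ^ 1 := pow_le_pow_of_le_one hn0 hn hij
      _ = n := by ring
  have e : (1 + 4 * y + 10 * y ^ 2 + 20 * y ^ 3 + 35 * y ^ 4 + 56 * y ^ 5) -
      (1 + 4 * w + 10 * w ^ 2 + 20 * w ^ 3 + 35 * w ^ 4 + 56 * w ^ 5) - 4 * (y - w) =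
      (y - w) * (10 * (y^1*w^0 + y^0*w^1) + 20 * (y^2*w^0 + y^1*w^1 + y^0*w^2) +
        35 * (y^3*w^0 + y^2*w^1 + y^1*w^2 + y^0*w^3) +
        56 * (y^4*w^0 + y^3*w^1+y^2*w^2+y^1*w^3+y^0*w^4)) := by ring
  rw [e, abs_mul]
  refine mul_le_mul_of_nonneg_left ?_ (abs_nonneg _)
  have m10 := abs_le.1 (m 1 0 (by norm_num))
  have m01 := abs_le.1 (m 0 1 (by norm_num))
  have m20 := abs_le.1 (m 2 0 (by norm_num))
  have m11 := abs_le.1 (m 1 1 (by norm_num))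
  have m02 := abs_le.1 (m 0 2 (by norm_num))
  have m30 := abs_le.1 (m 3 0 (by norm_num))
  have m21 := abs_le.1 (m 2 1 (by norm_num))
  have m12 := abs_le.1 (m 1 2 (by norm_num))
  have m03 := abs_le.1 (m 0 3 (by norm_num))
  have m40 := abs_le.1 (m 4 0 (by norm_num))
  have m31 := abs_le.1 (m 3 1 (by norm_num))
  have m22 := abs_le.1 (m 2 2 (by norm_num))
  have m13 := abs_le.1 (m 1 3 (by norm_num))
  have m04 := abs_le.1 (m 0 4 (by norm_num))
  rw [abs_le]
  constructor
  · linarith [m10.1, m01.1, m20.1, m11.1, m02.1, m30.1, m21.1, m12.1, m03.1, m40.1, m31.1, m22.1, m13.1, m04.1]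
  · linarith [m10.2, m01.2, m20.2, m11.2, m02.2, m30.2, m21.2, m12.2, m03.2, m40.2, m31.2, m22.2, m13.2, m04.2]

theorem sx_expand (P1 P5 A B : ℝ → ℝ) (c5 : Continuous P5) (M T x N : ℝ)
    (hT : 0 ≤ T) (hM : 0 ≤ M) (hA : ∀ t, HasDerivAt A (P1 t) t) (hB : ∀ t, HasDerivAt B (P5 t) t)
    (A0 : A 0 = 0) (AT : A T = 0) (B0 : B 0 = 0)
    (b5 : ∀ t ∈ Set.Icc 0 T, |P5 t| ≤ M) (bA : ∀ t ∈ Set.Icc 0 T, |A t| ≤ M)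
    (hx : 0 < x) (hx1 : x ≤ 1) (hN : N = M + 16 * M * T) (hNx : N * x ≤ 1 / 2)
    (r : ℝ → ℝ) (r0 : r 0 = x) (rT : r T = x)
    (hr : ∀ θ ∈ Set.Icc 0 T,
      HasDerivAt r (r θ * (P1 θ * r θ + P5 θ * r θ ^ 5)) θ ∧ x / 2 ≤ r θ ∧ r θ ≤ 2 * x) :
    |∫ t in (0:ℝ)..T, P5 t * ((1 + 4 * (x * A t) + 10 * (x * A t) ^ 2 + 20 * (x * A t) ^ 3
      + 35 * (x * A t) ^ 4 + 56 * (x * A t) ^ 5) + 4 * x ^ 5 * B t)|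
      ≤ (M * (8720 * N ^ 6 + (16 * M * T) * (500 * N) + 4 * (M * 240 * N * T)) * T) * x ^ 6 := by
  have rpos : ∀ θ ∈ Set.Icc 0 T, 0 < r θ := fun θ hθ => by linarith [(hr θ hθ).2.1]
  set d : ℝ → ℝ := fun t => (r t)⁻¹ - x⁻¹ + A t with hd
  have dd : ∀ t ∈ Set.Icc 0 T, HasDerivAt d (-(P5 t * r t ^ 4)) t := by
    intro t ht
    have hp := (rpos t ht).ne'
    exact ((((hr t ht).1.inv hp).sub_const x⁻¹).add (hA t)).congr_deriv (by field_simp; ring)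
  have d0 : d 0 = 0 := by simp [hd, r0, A0]
  have dT : d T = 0 := by simp [hd, rT, AT]
  have cd : ContinuousOn r (Set.Icc 0 T) := fun t ht => (hr t ht).1.continuousAt.continuousWithinAt
  have hN0 : 0 ≤ N := by rw [hN]; positivity
  -- first bound on d
  have bd : ∀ t ∈ Set.Icc 0 T, |d t| ≤ (16 * M * T) * x ^ 4 := by
    intro t ht
    have := norm_image_sub_le_of_norm_deriv_le_segment' (f := d) (a := 0) (b := T)
      (C := M * (2 * x) ^ 4) (fun s hs => (dd s hs).hasDerivWithinAt) (fun s hs => by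
        have hs' := Set.Ico_subset_Icc_self hs
        rw [Real.norm_eq_abs, abs_neg, abs_mul, abs_pow, abs_of_pos (rpos s hs')]
        have := rpos s hs'
        gcongr
        · exact b5 s hs'
        · exact (hr s hs').2.2) t ht
    rw [d0, sub_zero, sub_zero, Real.norm_eq_abs] at this
    calc _ ≤ _ := this
      _ ≤ M * (2 * x) ^ 4 * T := by gcongr; exact ht.2
      _ = _ := by ring
  have hu : ∀ t ∈ Set.Icc 0 T, (r t / x) * (1 - x * (A t - d t)) = 1 := by
    intro t ht
    have hp := (rpos t ht).ne'
    simp only [hd]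
    field_simp
    ring
  have hyb : ∀ t ∈ Set.Icc 0 T, |x * (A t - d t)| ≤ N * x := by
    intro t ht
    rw [abs_mul, abs_of_pos hx, mul_comm]
    gcongr
    calc _ ≤ |A t| + |d t| := abs_sub _ _
      _ ≤ M + (16 * M * T) * x ^ 4 := add_le_add (bA t ht) (bd t ht)
      _ ≤ M + (16 * M * T) * 1 := by gcongr; exact pow_le_one₀ hx.le hx1
      _ = N := by rw [hN]; ring
  have br : ∀ t ∈ Set.Icc 0 T, |r t ^ 4 - x ^ 4| ≤ 240 * N * x ^ 5 := by
    intro t ht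
    have h1 := sx_pt1 _ _ ((hyb t ht).trans hNx) (hu t ht)
    have e : r t ^ 4 - x ^ 4 = x ^ 4 * ((r t / x) ^ 4 - 1) := by field_simp
    rw [e, abs_mul, abs_of_pos (by positivity : 0 < x ^ 4)]
    calc _ ≤ x ^ 4 * (240 * (N * x)) := by
          gcongr
          exact h1.trans (by gcongr; exact hyb t ht)
      _ = _ := by ring
  have bd2 : ∀ t ∈ Set.Icc 0 T, |d t + x ^ 4 * B t| ≤ (M * 240 * N * T) * x ^ 5 := by
    intro t ht
    have := norm_image_sub_le_of_norm_deriv_le_segment' (f := fun t => d t + x ^ 4 * B t) (a := 0) (b := T)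
      (C := M * (240 * N * x ^ 5)) (fun s hs => ((dd s hs).add ((hB s).const_mul (x ^ 4))).hasDerivWithinAt) (fun s hs => by
        have hs' := Set.Ico_subset_Icc_self hs
        have e : -(P5 s * r s ^ 4) + x ^ 4 * P5 s = - (P5 s * (r s ^ 4 - x ^ 4)) := by ring
        rw [e, Real.norm_eq_abs, abs_neg, abs_mul]
        gcongr
        · exact b5 s hs'
        · exact br s hs') t ht
    simp only [d0, B0, mul_zero, add_zero, sub_zero, Real.norm_eq_abs] at this
    calc _ ≤ _ := this
      _ ≤ M * (240 * N * x ^ 5) * T := by gcongr; exact ht.2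
      _ = _ := by ring
  have cA : Continuous A := continuous_iff_continuousAt.2 fun t => (hA t).continuousAt
  have cB : Continuous B := continuous_iff_continuousAt.2 fun t => (hB t).continuousAt
  have ub : Set.uIcc 0 T = Set.Icc 0 T := Set.uIcc_of_le hT
  have int1 : IntervalIntegrable (fun t => P5 t * r t ^ 4) MeasureTheory.volume 0 T := by
    apply ContinuousOn.intervalIntegrable
    rw [ub]
    exact c5.continuousOn.mul (cd.pow 4)
  have I0 : ∫ t in (0:ℝ)..T, P5 t * r t ^ 4 = 0 := by
    have := intervalIntegral.integral_eq_sub_of_hasDerivAt (a := 0) (b := T) (f := d)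
      (fun t ht => dd t (ub ▸ ht)) int1.neg
    rw [d0, dT, intervalIntegral.integral_neg] at this
    linarith
  have I1 : ∫ t in (0:ℝ)..T, P5 t * (r t / x) ^ 4 = 0 := by
    have : (fun t => P5 t * (r t / x) ^ 4) = fun t => (x ^ 4)⁻¹ * (P5 t * r t ^ 4) := by
      funext t; field_simp
    rw [this, intervalIntegral.integral_const_mul, I0, mul_zero]
  have int2 : IntervalIntegrable (fun t => P5 t * (r t / x) ^ 4) MeasureTheory.volume 0 T := by
    apply ContinuousOn.intervalIntegrable
    rw [ub]
    exact c5.continuousOn.mul ((cd.div_const x).pow 4)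
  have int3 : IntervalIntegrable (fun t => P5 t * ((1 + 4 * (x * A t) + 10 * (x * A t) ^ 2 + 20 * (x * A t) ^ 3
      + 35 * (x * A t) ^ 4 + 56 * (x * A t) ^ 5) + 4 * x ^ 5 * B t)) MeasureTheory.volume 0 T :=
    Continuous.intervalIntegrable (by fun_prop) _ _
  have I2 := intervalIntegral.integral_sub int3 int2
  rw [I1, sub_zero] at I2
  rw [← I2]
  have fin := intervalIntegral.norm_integral_le_of_norm_le_const (a := 0) (b := T)
    (f := fun t => P5 t * ((1 + 4 * (x * A t) + 10 * (x * A t) ^ 2 + 20 * (x * A t) ^ 3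
      + 35 * (x * A t) ^ 4 + 56 * (x * A t) ^ 5) + 4 * x ^ 5 * B t) - P5 t * (r t / x) ^ 4)
    (C := M * ((8720 * N ^ 6 + (16 * M * T) * (500 * N) + 4 * (M * 240 * N * T)) * x ^ 6)) (fun t ht => by
      rw [Set.uIoc_of_le hT] at ht
      have ht' := Set.Ioc_subset_Icc_self ht
      rw [← mul_sub, Real.norm_eq_abs, abs_mul]
      gcongr
      · exact b5 t ht'
      have q1 := hyb t ht'
      have q2 := sx_pt2 _ _ (q1.trans hNx) (hu t ht')
      have q3 : |x * A t| ≤ N * x := by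
        rw [abs_mul, abs_of_pos hx, mul_comm]
        gcongr
        exact (bA t ht').trans (by rw [hN]; nlinarith [mul_nonneg hM hT])
      have q4 := sx_pt3 _ _ _ q1 q3 (by linarith)
      have q5 := bd2 t ht'
      have q6 : |x * (A t - d t) - x * A t| ≤ (16 * M * T) * x ^ 5 := by
        have : x * (A t - d t) - x * A t = - (x * d t) := by ring
        rw [this, abs_neg, abs_mul, abs_of_pos hx]
        calc _ ≤ x * ((16 * M * T) * x ^ 4) := by gcongr; exact bd t ht'
          _ = _ := by ring
      have q7 : 8720 * |x * (A t - d t)| ^ 6 ≤ 8720 * (N * x) ^ 6 := by gcongr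
      have q8 : |x * (A t - d t) - x * A t| * (500 * (N * x)) ≤ ((16 * M * T) * x ^ 5) * (500 * (N * x)) := by gcongr
      have q9 : |4 * x * (d t + x ^ 4 * B t)| ≤ 4 * x * ((M * 240 * N * T) * x ^ 5) := by
        rw [abs_mul, abs_of_pos (by positivity : 0 < 4 * x)]
        gcongr
      have r2 := abs_le.1 (q2.trans q7)
      have r4 := abs_le.1 (q4.trans q8)
      have r9 := abs_le.1 q9
      rw [abs_le]
      generalize hF : 1 + 4 * (x * (A t - d t)) + 10 * (x * (A t - d t)) ^ 2 + 20 * (x * (A t - d t)) ^ 3 + 35 * (x * (A t - d t)) ^ 4 + 56 * (x * (A t - d t)) ^ 5 = F at *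
      generalize hG : 1 + 4 * (x * A t) + 10 * (x * A t) ^ 2 + 20 * (x * A t) ^ 3 + 35 * (x * A t) ^ 4 + 56 * (x * A t) ^ 5 = G at *
      constructor <;> linarith [r2.1, r2.2, r4.1, r4.2, r9.1, r9.2])
  rw [Real.norm_eq_abs, sub_zero, abs_of_nonneg hT] at fin
  calc _ ≤ _ := fin
    _ = _ := by ring

theorem sx_moments (P1 P5 A : ℝ → ℝ) (c1 : Continuous P1) (c5 : Continuous P5)
    (hA : ∀ t, HasDerivAt A (P1 t) t) (A0 : A 0 = 0) (AT : A (2 * Real.pi) = 0)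
    (hc : HasCenterAtZero (fun θ r => r * (P1 θ * r + P5 θ * r ^ 5))) (k : ℕ) (hk : k ≤ 5) :
    ∫ t in (0:ℝ)..(2 * Real.pi), P5 t * A t ^ k = 0 := by
  obtain ⟨ε, hε, hc⟩ := hc
  have hT : 0 ≤ 2 * Real.pi := by positivity
  generalize 2 * Real.pi = T at *
  have cA : Continuous A := continuous_iff_continuousAt.2 fun t => (hA t).continuousAt
  set B : ℝ → ℝ := fun u => ∫ t in (0:ℝ)..u, P5 t with hBdef
  have hB : ∀ t, HasDerivAt B (P5 t) t := fun t => (c5.integral_hasStrictDerivAt 0 t).hasDerivAt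
  have B0 : B 0 = 0 := by simp [hBdef]
  have cB : Continuous B := continuous_iff_continuousAt.2 fun t => (hB t).continuousAt
  obtain ⟨M, hM, b1, b5, bA⟩ : ∃ M, 0 ≤ M ∧ (∀ t ∈ Set.Icc (-1) (T+1), |P1 t| ≤ M) ∧
      (∀ t ∈ Set.Icc (-1) (T+1), |P5 t| ≤ M) ∧ (∀ t ∈ Set.Icc (-1) (T+1), |A t| ≤ M) := by
    obtain ⟨M, hM⟩ := (isCompact_Icc (a := (-1:ℝ)) (b := T+1)).exists_bound_of_continuousOn
      (f := fun t => |P1 t| + |P5 t| + |A t|) (by fun_prop)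
    have key : ∀ t ∈ Set.Icc (-1) (T+1), |P1 t| + |P5 t| + |A t| ≤ M := fun t ht =>
      (le_abs_self _).trans (hM t ht)
    refine ⟨M, (norm_nonneg _).trans (hM 0 ⟨by norm_num, by linarith⟩), ?_, ?_, ?_⟩ <;>
    · intro t ht
      linarith [key t ht, abs_nonneg (P1 t), abs_nonneg (P5 t), abs_nonneg (A t)]
  have sub : Set.Icc 0 T ⊆ Set.Icc (-1) (T+1) := Set.Icc_subset_Icc (by norm_num) (by linarith)
  set N := M + 16 * M * T with hN
  have hN0 : 0 ≤ N := by positivity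
  obtain ⟨x0, hx0, hs1, hs2, hs3, hs4⟩ : ∃ x0 : ℝ, 0 < x0 ∧ x0 ≤ 1/2 ∧ x0 ≤ ε ∧ N * x0 ≤ 1/2 ∧
      16 * M * (T + 1) * x0 ≤ 1 := by
    refine ⟨min (min (1/2) ε) (1 / (2 * N + 16 * M * (T + 1) + 1)), by positivity, ?_, ?_, ?_, ?_⟩
    · exact (min_le_left _ _).trans (min_le_left _ _)
    · exact (min_le_left _ _).trans (min_le_right _ _)
    · have h1 : min (min (1/2) ε) (1 / (2 * N + 16 * M * (T + 1) + 1)) ≤ 1 / (2 * N + 16 * M * (T + 1) + 1) := min_le_right _ _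
      have h2 : N * (1 / (2 * N + 16 * M * (T + 1) + 1)) ≤ 1/2 := by
        rw [mul_one_div, div_le_iff₀ (by positivity)]
        nlinarith [mul_nonneg hM (by linarith : 0 ≤ T + 1)]
      exact (mul_le_mul_of_nonneg_left h1 hN0).trans h2
    · have h1 : min (min (1/2) ε) (1 / (2 * N + 16 * M * (T + 1) + 1)) ≤ 1 / (2 * N + 16 * M * (T + 1) + 1) := min_le_right _ _
      have h2 : 16 * M * (T + 1) * (1 / (2 * N + 16 * M * (T + 1) + 1)) ≤ 1 := by
        rw [mul_one_div, div_le_iff₀ (by positivity)]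
        linarith
      exact (mul_le_mul_of_nonneg_left h1 (by positivity)).trans h2
  have main := sx_coef (∫ t in (0:ℝ)..T, P5 t) (4 * ∫ t in (0:ℝ)..T, P5 t * A t)
    (10 * ∫ t in (0:ℝ)..T, P5 t * A t ^ 2) (20 * ∫ t in (0:ℝ)..T, P5 t * A t ^ 3)
    (35 * ∫ t in (0:ℝ)..T, P5 t * A t ^ 4)
    (56 * (∫ t in (0:ℝ)..T, P5 t * A t ^ 5) + 4 * ∫ t in (0:ℝ)..T, P5 t * B t)
    (M * (8720 * N ^ 6 + (16 * M * T) * (500 * N) + 4 * (M * 240 * N * T)) * T) x0 hx0 (by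
      intro x hx hxx
      obtain ⟨r, r0, hr⟩ := sx_exist P1 P5 c1 c5 M T hT hM b1 b5 x hx (by linarith) (by
        have : 16 * M * (T + 1) * x ≤ 1 := le_trans (by gcongr) hs4
        nlinarith)
      have rT : r T = x := by
        rw [← r0]
        refine hc r ?_ (fun θ hθ => (hr θ hθ).1)
        rw [r0, abs_of_pos hx]; linarith
      have ex := sx_expand P1 P5 A B c5 M T x N hT hM hA hB A0 AT B0 (fun t ht => b5 t (sub ht))
        (fun t ht => bA t (sub ht)) hx (by linarith) hN (le_trans (by gcongr) hs3) r r0 rT hr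
      convert ex using 2
      have ii : ∀ f : ℝ → ℝ, Continuous f → IntervalIntegrable f MeasureTheory.volume 0 T :=
        fun f hf => hf.intervalIntegrable _ _
      have e : (fun t => P5 t * ((1 + 4 * (x * A t) + 10 * (x * A t) ^ 2 + 20 * (x * A t) ^ 3
        + 35 * (x * A t) ^ 4 + 56 * (x * A t) ^ 5) + 4 * x ^ 5 * B t)) = fun t =>
          P5 t + (4 * x) * (P5 t * A t) + (10 * x ^ 2) * (P5 t * A t ^ 2) + (20 * x ^ 3) * (P5 t * A t ^ 3)
           + (35 * x ^ 4) * (P5 t * A t ^ 4) + (56 * x ^ 5) * (P5 t * A t ^ 5) + (4 * x ^ 5) * (P5 t * B t) := by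
        funext t; ring
      rw [e]
      rw [intervalIntegral.integral_add (ii _ (by fun_prop)) (ii _ (by fun_prop)),
        intervalIntegral.integral_add (ii _ (by fun_prop)) (ii _ (by fun_prop)),
        intervalIntegral.integral_add (ii _ (by fun_prop)) (ii _ (by fun_prop)),
        intervalIntegral.integral_add (ii _ (by fun_prop)) (ii _ (by fun_prop)),
        intervalIntegral.integral_add (ii _ (by fun_prop)) (ii _ (by fun_prop)),
        intervalIntegral.integral_add (ii _ (by fun_prop)) (ii _ (by fun_prop))]
      simp only [intervalIntegral.integral_const_mul]
      ring)
  obtain ⟨m0, m1, m2, m3, m4, m5⟩ := main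
  have BT : B T = 0 := m0
  have IB : ∫ t in (0:ℝ)..T, P5 t * B t = 0 := by
    have := intervalIntegral.integral_eq_sub_of_hasDerivAt (a := 0) (b := T) (f := fun t => B t ^ 2 / 2)
      (f' := fun t => P5 t * B t) (fun t _ => by
        exact (((hB t).pow 2).div_const 2).congr_deriv (by norm_num; ring)) (Continuous.intervalIntegrable (by fun_prop) _ _)
    rw [this, B0, BT]; simp
  rw [IB] at m5
  interval_cases k
  · simpa using m0
  · simpa using m1
  · simpa using m2
  · simpa using m3
  · simpa using m4
  · simpa using m5

theorem sx_even (P5 : ℝ → ℝ) (c5 : Continuous P5) (per : Function.Periodic P5 (2 * Real.pi))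
    (t0 k al be ga : ℝ) (hk : k ≠ 0)
    (hsym : ∀ v, P5 (t0 + v) + P5 (t0 - v) =
      2 * (al * Real.cos v + be * Real.cos v ^ 3 + ga * Real.cos v ^ 5))
    (hm : ∀ j : ℕ, j ≤ 5 →
      ∫ t in (0:ℝ)..(2 * Real.pi), P5 t * (k * (Real.cos (t - t0) - Real.cos t0)) ^ j = 0) :
    al = 0 ∧ be = 0 ∧ ga = 0 := by
  set e : ℝ → ℝ := fun t => al * Real.cos (t - t0) + be * Real.cos (t - t0) ^ 3 + ga * Real.cos (t - t0) ^ 5 with he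
  have ce : Continuous e := by fun_prop
  have pe : Function.Periodic e (2 * Real.pi) := by
    intro t
    have : t + 2 * Real.pi - t0 = t - t0 + 2 * Real.pi := by ring
    simp only [he, this, Real.cos_add_two_pi]
  have re : ∀ t, e (2 * t0 - t) = e t := by
    intro t
    have : 2 * t0 - t - t0 = -(t - t0) := by ring
    simp only [he, this, Real.cos_neg]
  have ii : ∀ f : ℝ → ℝ, Continuous f → IntervalIntegrable f MeasureTheory.volume 0 (2 * Real.pi) :=
    fun f hf => hf.intervalIntegrable _ _
  have I1 : ∫ t in (0:ℝ)..(2 * Real.pi), P5 t * e t = 0 := by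
    set c := Real.cos t0 with hc
    set A : ℝ → ℝ := fun t => k * (Real.cos (t - t0) - c) with hA
    have cA : Continuous A := by fun_prop
    have e1 : (fun t => P5 t * e t) = fun t =>
        (al * c + be * c ^ 3 + ga * c ^ 5) * (P5 t * A t ^ 0) +
        (k⁻¹ * (al + 3 * be * c ^ 2 + 5 * ga * c ^ 4)) * (P5 t * A t ^ 1) +
        (k⁻¹ ^ 2 * (3 * be * c + 10 * ga * c ^ 3)) * (P5 t * A t ^ 2) +
        (k⁻¹ ^ 3 * (be + 10 * ga * c ^ 2)) * (P5 t * A t ^ 3) +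
        (k⁻¹ ^ 4 * (5 * ga * c)) * (P5 t * A t ^ 4) +
        (k⁻¹ ^ 5 * ga) * (P5 t * A t ^ 5) := by
      funext t
      simp only [he, hA]
      field_simp
      ring
    rw [e1]
    rw [intervalIntegral.integral_add (ii _ (by fun_prop)) (ii _ (by fun_prop)),
        intervalIntegral.integral_add (ii _ (by fun_prop)) (ii _ (by fun_prop)),
        intervalIntegral.integral_add (ii _ (by fun_prop)) (ii _ (by fun_prop)),
        intervalIntegral.integral_add (ii _ (by fun_prop)) (ii _ (by fun_prop)),
        intervalIntegral.integral_add (ii _ (by fun_prop)) (ii _ (by fun_prop))]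
    simp only [intervalIntegral.integral_const_mul]
    rw [hm 0 (by norm_num), hm 1 (by norm_num), hm 2 (by norm_num), hm 3 (by norm_num),
      hm 4 (by norm_num), hm 5 (by norm_num)]
    simp
  have I2 : ∫ t in (0:ℝ)..(2 * Real.pi), P5 (2 * t0 - t) * e t = 0 := by
    have h1 := intervalIntegral.integral_comp_sub_left (a := 0) (b := 2 * Real.pi)
      (fun t => P5 t * e t) (2 * t0)
    simp only [re] at h1
    rw [h1]
    have h2 := (per.mul pe).intervalIntegral_add_eq (2 * t0 - 2 * Real.pi) 0
    simp only [Pi.mul_apply, zero_add, sub_add_cancel] at h2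
    rw [sub_zero, h2, I1]
  have I3 : ∫ t in (0:ℝ)..(2 * Real.pi), e t ^ 2 = 0 := by
    have h1 := intervalIntegral.integral_add (ii (fun t => P5 t * e t) (by fun_prop))
      (ii (fun t => P5 (2 * t0 - t) * e t) (by fun_prop))
    rw [I1, I2, add_zero] at h1
    have h2 : (fun t => P5 t * e t + P5 (2 * t0 - t) * e t) = fun t => 2 * e t ^ 2 := by
      funext t
      have := hsym (t - t0)
      have a1 : t0 + (t - t0) = t := by ring
      have a2 : t0 - (t - t0) = 2 * t0 - t := by ring
      rw [a1, a2] at this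
      rw [← add_mul, this]
      simp only [he]; ring
    rw [h2, intervalIntegral.integral_const_mul] at h1
    linarith
  have z : ∀ t ∈ Set.Icc 0 (2 * Real.pi), e t = 0 := by
    intro t ht
    by_contra hne
    have := intervalIntegral.integral_pos (f := fun t => e t ^ 2) Real.two_pi_pos
      (by fun_prop) (fun x _ => sq_nonneg _) ⟨t, ht, by positivity⟩
    linarith
  have zz : ∀ y : ℝ, -1 ≤ y → y ≤ 1 → al * y + be * y ^ 3 + ga * y ^ 5 = 0 := by
    intro y h1 h2
    obtain ⟨t, ht, hte⟩ := pe.exists_mem_Ico₀ Real.two_pi_pos (t0 + Real.arccos y)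
    rw [z t (Set.Ico_subset_Icc_self ht)] at hte
    simpa [he, Real.cos_arccos h1 h2] using hte
  have z1 := zz 1 (by norm_num) (by norm_num)
  have z2 := zz (1/2) (by norm_num) (by norm_num)
  have z3 := zz (1/4) (by norm_num) (by norm_num)
  refine ⟨?_, ?_, ?_⟩ <;> linarith

/-- Corollary 2.7: center conditions for `dr/dθ = r (P₁ r + P₅ r⁵)`. -/
theorem sextic_center_conditions
    (p10 p01 p50 p41 p32 p23 p14 p05 : ℝ) (h : p10 ^ 2 + p01 ^ 2 ≠ 0)
    (P1 P5 : ℝ → ℝ)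
    (hP1 : ∀ θ, P1 θ = p10 * Real.cos θ + p01 * Real.sin θ)
    (hP5 : ∀ θ, P5 θ = p50 * Real.cos θ ^ 5 + p41 * Real.cos θ ^ 4 * Real.sin θ +
      p32 * Real.cos θ ^ 3 * Real.sin θ ^ 2 + p23 * Real.cos θ ^ 2 * Real.sin θ ^ 3 +
      p14 * Real.cos θ * Real.sin θ ^ 4 + p05 * Real.sin θ ^ 5) :
    HasCenterAtZero (fun θ r => r * (P1 θ * r + P5 θ * r ^ 5)) ↔
      (p01 * (5 * p50 + p32 + p14) = p10 * (5 * p05 + p23 + p41) ∧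
       p10 ^ 3 * (p23 + 10 * p05) - 3 * p10 ^ 2 * p01 * (2 * p14 + p32) +
         3 * p10 * p01 ^ 2 * (p23 + 2 * p41) - p01 ^ 3 * (p32 + 10 * p50) = 0 ∧
       p50 * p01 ^ 5 - p41 * p01 ^ 4 * p10 + p32 * p01 ^ 3 * p10 ^ 2 -
         p23 * p01 ^ 2 * p10 ^ 3 + p14 * p01 * p10 ^ 4 - p05 * p10 ^ 5 = 0) := by
  have c1 : Continuous P1 := by
    rw [show P1 = _ from funext hP1]; fun_prop
  have c5 : Continuous P5 := by
    rw [show P5 = _ from funext hP5]; fun_prop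
  obtain ⟨t0, ht0, hz⟩ : ∃ t0 ∈ Set.Icc 0 Real.pi, P1 t0 = 0 := by
    have h0 : P1 0 = p10 := by simp [hP1]
    have hpi : P1 Real.pi = -p10 := by simp [hP1]
    rcases le_total 0 p10 with hp | hp
    · exact intermediate_value_Icc' Real.pi_pos.le c1.continuousOn ⟨by linarith, by linarith⟩
    · exact intermediate_value_Icc Real.pi_pos.le c1.continuousOn ⟨by linarith, by linarith⟩
  rw [hP1] at hz
  have hcs := Real.cos_sq_add_sin_sq t0
  obtain ⟨c, hc⟩ : ∃ c, c = Real.cos t0 := ⟨_, rfl⟩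
  obtain ⟨s, hs⟩ : ∃ s, s = Real.sin t0 := ⟨_, rfl⟩
  rw [← hc, ← hs] at hz hcs
  obtain ⟨k, hkd⟩ : ∃ k, k = p10 * s - p01 * c := ⟨_, rfl⟩
  have e10 : p10 = k * s := by rw [hkd]; linear_combination c * hz - p10 * hcs
  have e01 : p01 = -(k * c) := by rw [hkd]; linear_combination s * hz - p01 * hcs
  have hk : k ≠ 0 := by
    rintro rfl
    apply h; rw [e10, e01]; ring
  obtain ⟨Q0, hQ0⟩ : ∃ Q, Q = p50 * (c ^ 5 * s ^ 0)
      + p41 * (c ^ 4 * s ^ 1)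
      + p32 * (c ^ 3 * s ^ 2)
      + p23 * (c ^ 2 * s ^ 3)
      + p14 * (c ^ 1 * s ^ 4)
      + p05 * (c ^ 0 * s ^ 5) := ⟨_, rfl⟩
  obtain ⟨Q2, hQ2⟩ : ∃ Q, Q = p50 * ((10) * c ^ 3 * s ^ 2)
      + p41 * ((-4) * c ^ 4 * s ^ 1 + (6) * c ^ 2 * s ^ 3)
      + p32 * (c ^ 5 * s ^ 0 + (-6) * c ^ 3 * s ^ 2 + (3) * c ^ 1 * s ^ 4)
      + p23 * ((3) * c ^ 4 * s ^ 1 + (-6) * c ^ 2 * s ^ 3 + c ^ 0 * s ^ 5)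
      + p14 * ((6) * c ^ 3 * s ^ 2 + (-4) * c ^ 1 * s ^ 4)
      + p05 * ((10) * c ^ 2 * s ^ 3) := ⟨_, rfl⟩
  obtain ⟨Q4, hQ4⟩ : ∃ Q, Q = p50 * ((5) * c ^ 1 * s ^ 4)
      + p41 * ((-4) * c ^ 2 * s ^ 3 + c ^ 0 * s ^ 5)
      + p32 * ((3) * c ^ 3 * s ^ 2 + (-2) * c ^ 1 * s ^ 4)
      + p23 * ((-2) * c ^ 4 * s ^ 1 + (3) * c ^ 2 * s ^ 3)
      + p14 * (c ^ 5 * s ^ 0 + (-4) * c ^ 3 * s ^ 2)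
      + p05 * ((5) * c ^ 4 * s ^ 1) := ⟨_, rfl⟩
  have hsym : ∀ v, P5 (t0 + v) + P5 (t0 - v) =
      2 * (Q4 * Real.cos v + (Q2 - 2 * Q4) * Real.cos v ^ 3 + (Q0 - Q2 + Q4) * Real.cos v ^ 5) := by
    intro v
    have e : P5 (t0 + v) + P5 (t0 - v) = 2 * (Q0 * Real.cos v ^ 5 + Q2 * Real.cos v ^ 3 * Real.sin v ^ 2
        + Q4 * Real.cos v * (Real.sin v ^ 2) ^ 2) := by
      rw [hP5, hP5, Real.cos_add, Real.sin_add, Real.cos_sub, Real.sin_sub, ← hc, ← hs, hQ0, hQ2, hQ4]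
      ring
    rw [e, Real.sin_sq]
    ring
  have o1 : ∀ v, P1 (t0 + v) = - P1 (t0 - v) := by
    intro v
    rw [hP1, hP1, Real.cos_add, Real.sin_add, Real.cos_sub, Real.sin_sub, ← hc, ← hs]
    linear_combination 2 * Real.cos v * hz
  have i0 : p50 * p01 ^ 5 - p41 * p01 ^ 4 * p10 + p32 * p01 ^ 3 * p10 ^ 2 -
         p23 * p01 ^ 2 * p10 ^ 3 + p14 * p01 * p10 ^ 4 - p05 * p10 ^ 5 = - k ^ 5 * Q0 := by
    rw [hQ0, e10, e01]; ring
  have i2 : p10 ^ 3 * (p23 + 10 * p05) - 3 * p10 ^ 2 * p01 * (2 * p14 + p32) +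
         3 * p10 * p01 ^ 2 * (p23 + 2 * p41) - p01 ^ 3 * (p32 + 10 * p50) = k ^ 3 * (10 * Q0 + Q2) := by
    have : 10 * Q0 + Q2 = (s ^ 3 * (p23 + 10 * p05) + 3 * s ^ 2 * c * (2 * p14 + p32) +
         3 * s * c ^ 2 * (p23 + 2 * p41) + c ^ 3 * (p32 + 10 * p50)) * (c ^ 2 + s ^ 2) := by
      rw [hQ0, hQ2]; ring
    rw [this, hcs, e10, e01]; ring
  have i4 : p01 * (5 * p50 + p32 + p14) - p10 * (5 * p05 + p23 + p41) = - k * (5 * Q0 + Q2 + Q4) := by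
    have : 5 * Q0 + Q2 + Q4 = (c * (5 * p50 + p32 + p14) + s * (5 * p05 + p23 + p41)) * (c ^ 2 + s ^ 2) ^ 2 := by
      rw [hQ0, hQ2, hQ4]; ring
    rw [this, hcs, e10, e01]; ring
  constructor
  · intro hcen
    have per : Function.Periodic P5 (2 * Real.pi) := by
      intro t; rw [hP5, hP5, Real.cos_add_two_pi, Real.sin_add_two_pi]
    have hm := sx_moments P1 P5 (fun t => k * (Real.cos (t - t0) - Real.cos t0)) c1 c5
      (fun t => by
        have h1 := (((Real.hasDerivAt_cos (t - t0)).comp_sub_const t t0).sub_const (Real.cos t0)).const_mul k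
        refine h1.congr_deriv ?_
        rw [hP1, Real.sin_sub, ← hc, ← hs, e10, e01]; ring)
      (by simp) (by simp [Real.cos_two_pi_sub]) hcen
    obtain ⟨z4, z2, z0⟩ := sx_even P5 c5 per t0 k _ _ _ hk hsym hm
    have w2 : Q2 = 0 := by linarith
    have w0 : Q0 = 0 := by linarith
    refine ⟨?_, ?_, ?_⟩
    · rw [← sub_eq_zero, i4, z4, w2, w0]; ring
    · rw [i2, w2, w0]; ring
    · rw [i0, w0]; ring
  · rintro ⟨h1, h2, h3⟩
    rw [← sub_eq_zero, i4] at h1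
    rw [i2] at h2
    rw [i0] at h3
    have w0 : Q0 = 0 := by simpa [hk] using h3
    have w2 : Q2 = 0 := by simpa [hk, w0] using h2
    have w4 : Q4 = 0 := by simpa [hk, w0, w2] using h1
    have o5 : ∀ v, P5 (t0 + v) = - P5 (t0 - v) := by
      intro v
      have := hsym v
      rw [w0, w2, w4] at this
      linarith
    have per1 : Function.Antiperiodic P1 Real.pi := by
      intro t; rw [hP1, hP1, Real.cos_add_pi, Real.sin_add_pi]; ring
    have per5 : Function.Antiperiodic P5 Real.pi := by
      intro t; rw [hP5, hP5, Real.cos_add_pi, Real.sin_add_pi]; ring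
    have tr : ∀ f : ℝ → ℝ, Function.Antiperiodic f Real.pi → (∀ v, f (t0 + v) = - f (t0 - v)) →
        ∀ v, f (t0 + Real.pi + v) = - f (t0 + Real.pi - v) := by
      intro f hf ho v
      rw [show t0 + Real.pi + v = (t0 + v) + Real.pi by ring,
        show t0 + Real.pi - v = (t0 - v) + Real.pi by ring, hf, hf, ho]
    refine ⟨1, one_pos, fun r _ hr => ?_⟩
    have s1 := sx_sym P1 P5 c1 c5 t0 t0 ht0.1 o1 o5 r (fun θ hθ => hr θ
      ⟨by linarith [hθ.1], by linarith [hθ.2, ht0.2]⟩)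
    have s2 := sx_sym P1 P5 c1 c5 (t0 + Real.pi) (Real.pi - t0) (by linarith [ht0.2])
      (tr P1 per1 o1) (tr P5 per5 o5) r (fun θ hθ => hr θ
      ⟨by linarith [hθ.1, ht0.1], by linarith [hθ.2]⟩)
    rw [show t0 + Real.pi + (Real.pi - t0) = 2 * Real.pi by ring,
      show t0 + Real.pi - (Real.pi - t0) = t0 + t0 by ring, s1, sub_self] at s2
    exact s2
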